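/- Let ℓ and p be positive integers. Then the p-th central moment μ_{p,ℓ}[ADF] of the demerit factor over all 2^ℓ binary sequences of length ℓ is nonnegative. Moreover, μ_{p,ℓ}[ADF] = 0 if and only if (i) p = 1, or (ii) p > 1 is odd and ℓ ≤ 3, or (iii) p is even and ℓ ≤ 2; in all other cases μ_{p,ℓ}[ADF] > 0. -/

import Mathlib

/-! The sum of squared autocorrelations at nonzero shifts is
`∑ f (j + s) * f j * f (k + s) * f k` over shifts `s ≠ 0` and positions `j, k`. Terms with `j = k`
do not depend on the signs; in a term with `j ≠ k` the smallest of the four positions occurs only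
once, so flipping the sign there shows that the term has mean zero. Hence the deviation of `ADF`
from its mean is `1 / ℓ ^ 2` times a sum of monomials in the signs, each with coefficient one
(`ADF_sub_mean`). Its `p`-th power is again a sum of monomials, and a monomial has nonnegative mean
(`IsMonomial.sum_nonneg`), so every central moment is nonnegative; it is positive as soon as some
`p` of the monomials, repetitions allowed, multiply to `1` (`sum_pow_pos`).

Write `x i` for the sign at position `i`. For `ℓ ≥ 3` the monomial `x 0 * x 2` occurs, and its even
powers are `1`. For `ℓ ≥ 4` the monomials `x 0 * x 2`, `x 1 * x 3` and `x 0 * x 1 * x 2 * x 3` occur;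
their product is `1`, and multiplying it by an even power of `x 0 * x 2` gives every odd `p ≥ 3`.
For `ℓ ≤ 2` there are no monomials at all, and for `ℓ = 3` all of them are `x 0 * x 2`, so that
flipping the sign at position `0` negates the deviation and kills its odd powers. -/

open Finset Filter

noncomputable section

/-- The binary sequence of length `ℓ` determined by sign choices `ε`. -/
def seqOf (ℓ : ℕ) (ε : Fin ℓ → Bool) : ℤ → ℤ := fun j =>
  if h : 0 ≤ j ∧ j < (ℓ : ℤ) then (if ε ⟨j.toNat, by omega⟩ then 1 else -1) else 0

/-- Aperiodic autocorrelation of `f` at shift `s`. -/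
def autocorr (f : ℤ → ℤ) (s : ℤ) : ℤ := ∑ᶠ j : ℤ, f (j + s) * f j

/-- The sum of squares of all aperiodic autocorrelations. -/
def ssac (f : ℤ → ℤ) : ℝ := ∑ᶠ s : ℤ, ((autocorr f s : ℝ)) ^ 2

/-- The demerit factor of `f`. -/
def ADF (f : ℤ → ℤ) : ℝ :=
  (∑ᶠ s ∈ {s : ℤ | s ≠ 0}, ((autocorr f s : ℝ)) ^ 2) / (autocorr f 0 : ℝ) ^ 2

/-- Expectation of `v` over the `2^ℓ` binary sequences of length `ℓ`, each with
equal probability. -/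
def expect (ℓ : ℕ) (v : (ℤ → ℤ) → ℝ) : ℝ :=
  (∑ ε : Fin ℓ → Bool, v (seqOf ℓ ε)) / 2 ^ ℓ

/-- The `p`-th central moment of `v` over binary sequences of length `ℓ`. -/
def centralMoment (p ℓ : ℕ) (v : (ℤ → ℤ) → ℝ) : ℝ :=
  expect ℓ fun f => (v f - expect ℓ v) ^ p

/-- The entry at position `j`, as a real number. -/
def entry (ℓ : ℕ) (ε : Fin ℓ → Bool) (j : ℤ) : ℝ := (seqOf ℓ ε j : ℝ)

lemma entry_eq_zero {ℓ : ℕ} (ε : Fin ℓ → Bool) {j : ℤ} (h : ¬(0 ≤ j ∧ j < (ℓ : ℤ))) :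
    entry ℓ ε j = 0 := by
  simp [entry, seqOf, h]

lemma entry_of_mem {ℓ : ℕ} (ε : Fin ℓ → Bool) {j : ℤ} (h : 0 ≤ j ∧ j < (ℓ : ℤ)) :
    entry ℓ ε j = if ε ⟨j.toNat, by omega⟩ then 1 else -1 := by
  simp only [entry, seqOf, dif_pos h]
  split_ifs <;> simp

lemma entry_sq {ℓ : ℕ} (ε : Fin ℓ → Bool) {j : ℤ} (h : 0 ≤ j ∧ j < (ℓ : ℤ)) :
    entry ℓ ε j ^ 2 = 1 := by
  rw [entry_of_mem ε h]; split_ifs <;> norm_num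

/-! ### Sign flips -/

/-- Reverse the sign at position `i`. -/
def flipAt {ℓ : ℕ} (i : Fin ℓ) (ε : Fin ℓ → Bool) : Fin ℓ → Bool :=
  Function.update ε i (!ε i)

lemma flipAt_involutive {ℓ : ℕ} (i : Fin ℓ) : Function.Involutive (flipAt i) := by
  intro ε
  ext k
  by_cases h : k = i
  · subst h; simp [flipAt]
  · simp [flipAt, h]

lemma entry_flip {ℓ : ℕ} (ε : Fin ℓ → Bool) (i : Fin ℓ) (j : ℤ) :
    entry ℓ (flipAt i ε) j = (if j = (i : ℤ) then -1 else 1) * entry ℓ ε j := by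
  by_cases hj : 0 ≤ j ∧ j < (ℓ : ℤ)
  · rw [entry_of_mem _ hj, entry_of_mem _ hj]
    by_cases h : j = (i : ℤ)
    · have : (⟨j.toNat, by omega⟩ : Fin ℓ) = i := by ext; simp [h]
      rw [this]
      cases hε : ε i <;> simp [flipAt, h, hε]
    · have : (⟨j.toNat, by omega⟩ : Fin ℓ) ≠ i := by
        intro h'
        apply h
        rw [← h']
        simp [hj.1]
      simp [flipAt, h, this]
  · simp [entry_eq_zero _ hj]

lemma sum_eq_zero_of_flip {ℓ : ℕ} (i : Fin ℓ) (g : (Fin ℓ → Bool) → ℝ)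
    (h : ∀ ε, g (flipAt i ε) = -g ε) : ∑ ε, g ε = 0 := by
  have h1 : ∑ ε, g ((flipAt_involutive i).toPerm _ ε) = ∑ ε, g ε := Equiv.sum_comp _ g
  simp only [Function.Involutive.coe_toPerm, h, Finset.sum_neg_distrib] at h1
  linarith

/-! ### Monomials in the signs -/

/-- A function of the signs that is a monomial, with coefficient one, in the entries. -/
def IsMonomial {ℓ : ℕ} (g : (Fin ℓ → Bool) → ℝ) : Prop :=
  ∃ n : Fin ℓ → ℕ, ∀ ε, g ε = ∏ i, (if ε i then (1 : ℝ) else -1) ^ n i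

lemma IsMonomial.mul {ℓ : ℕ} {g h : (Fin ℓ → Bool) → ℝ} (hg : IsMonomial g) (hh : IsMonomial h) :
    IsMonomial fun ε => g ε * h ε := by
  obtain ⟨n, hn⟩ := hg
  obtain ⟨m, hm⟩ := hh
  exact ⟨fun i => n i + m i, fun ε => by simp only [hn, hm, pow_add, Finset.prod_mul_distrib]⟩

lemma IsMonomial.prod {ℓ : ℕ} {ι : Type*} (s : Finset ι) (g : ι → (Fin ℓ → Bool) → ℝ)
    (hg : ∀ i ∈ s, IsMonomial (g i)) : IsMonomial fun ε => ∏ i ∈ s, g i ε := by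
  classical
  induction s using Finset.induction_on with
  | empty => exact ⟨fun _ => 0, by simp⟩
  | insert a s ha ih =>
    simp only [Finset.prod_insert ha]
    exact (hg a (by simp)).mul (ih fun i hi => hg i (by simp [hi]))

lemma isMonomial_entry {ℓ : ℕ} {j : ℤ} (h : 0 ≤ j ∧ j < (ℓ : ℤ)) :
    IsMonomial fun ε => entry ℓ ε j := by
  refine ⟨fun i => if i = ⟨j.toNat, by omega⟩ then 1 else 0, fun ε => ?_⟩
  simp only [entry_of_mem ε h]
  rw [Finset.prod_eq_single (⟨j.toNat, by omega⟩ : Fin ℓ)] <;> simp +contextual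

/-- The sum factors over the positions, with factors `1 + (-1) ^ n i`. -/
lemma IsMonomial.sum_nonneg {ℓ : ℕ} {g : (Fin ℓ → Bool) → ℝ} (hg : IsMonomial g) :
    0 ≤ ∑ ε, g ε := by
  obtain ⟨n, hn⟩ := hg
  simp only [hn]
  rw [← Fintype.prod_sum fun i (b : Bool) => (if b then (1 : ℝ) else -1) ^ n i]
  refine Finset.prod_nonneg fun i _ => ?_
  rcases Nat.even_or_odd (n i) with h | h <;> simp [h.neg_one_pow]

lemma sum_pow_eq {ℓ : ℕ} {ι : Type*} (T : Finset ι) (m : ι → (Fin ℓ → Bool) → ℝ) (p : ℕ) :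
    ∑ ε, (∑ t ∈ T, m t ε) ^ p =
      ∑ q ∈ Fintype.piFinset fun _ : Fin p => T, ∑ ε, ∏ i, m (q i) ε := by
  rw [Finset.sum_comm]
  exact Finset.sum_congr rfl fun ε _ => Finset.sum_pow' _ _ _

lemma sum_pow_nonneg {ℓ : ℕ} {ι : Type*} (T : Finset ι) (m : ι → (Fin ℓ → Bool) → ℝ)
    (hm : ∀ t ∈ T, IsMonomial (m t)) (p : ℕ) : 0 ≤ ∑ ε, (∑ t ∈ T, m t ε) ^ p := by
  rw [sum_pow_eq]
  refine Finset.sum_nonneg fun q hq => (IsMonomial.prod _ _ fun i _ => hm _ ?_).sum_nonneg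
  exact Fintype.mem_piFinset.1 hq i

lemma sum_pow_pos {ℓ : ℕ} {ι : Type*} (T : Finset ι) (m : ι → (Fin ℓ → Bool) → ℝ)
    (hm : ∀ t ∈ T, IsMonomial (m t)) (p : ℕ) (q : Fin p → ι) (hq : ∀ i, q i ∈ T)
    (h1 : ∀ ε, ∏ i, m (q i) ε = 1) : 0 < ∑ ε, (∑ t ∈ T, m t ε) ^ p := by
  rw [sum_pow_eq]
  refine Finset.sum_pos' (fun q hq => (IsMonomial.prod _ _ fun i _ => hm _ ?_).sum_nonneg)
    ⟨q, Fintype.mem_piFinset.2 hq, ?_⟩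
  · exact Fintype.mem_piFinset.1 hq i
  · simp [h1]

/-! ### The deviation of the demerit factor from its mean -/

/-- The term of the squared autocorrelation at shift `t.1` given by the positions `t.2.1` and
`t.2.2`. -/
def term (ℓ : ℕ) (t : ℤ × ℤ × ℤ) (ε : Fin ℓ → Bool) : ℝ :=
  entry ℓ ε (t.2.1 + t.1) * entry ℓ ε t.2.1 * (entry ℓ ε (t.2.2 + t.1) * entry ℓ ε t.2.2)

/-- The indices `(s, j, k)` of the nonvanishing, nonconstant terms. -/
def idx (ℓ : ℕ) : Finset (ℤ × ℤ × ℤ) :=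
  (((Finset.Ioo (-(ℓ : ℤ)) ℓ).erase 0) ×ˢ Finset.Ico (0 : ℤ) ℓ ×ˢ Finset.Ico (0 : ℤ) ℓ).filter
    fun t => t.2.1 ≠ t.2.2 ∧ (0 ≤ t.2.1 + t.1 ∧ t.2.1 + t.1 < ℓ) ∧
      (0 ≤ t.2.2 + t.1 ∧ t.2.2 + t.1 < ℓ)

lemma mem_idx {ℓ : ℕ} {s j k : ℤ} : (s, j, k) ∈ idx ℓ ↔
    s ≠ 0 ∧ j ≠ k ∧ (0 ≤ j ∧ j < ℓ) ∧ (0 ≤ k ∧ k < ℓ) ∧ (0 ≤ j + s ∧ j + s < ℓ) ∧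
      (0 ≤ k + s ∧ k + s < ℓ) := by
  simp only [idx, Finset.mem_filter, Finset.mem_product, Finset.mem_erase, Finset.mem_Ioo,
    Finset.mem_Ico]
  constructor
  · rintro ⟨⟨⟨h1, h2⟩, h3, h4⟩, h5, h6, h7⟩
    exact ⟨h1, h5, h3, h4, h6, h7⟩
  · rintro ⟨h1, h5, h3, h4, h6, h7⟩
    exact ⟨⟨⟨h1, by omega, by omega⟩, h3, h4⟩, h5, h6, h7⟩

lemma isMonomial_term {ℓ : ℕ} {t : ℤ × ℤ × ℤ} (ht : t ∈ idx ℓ) : IsMonomial (term ℓ t) := by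
  obtain ⟨s, j, k⟩ := t
  obtain ⟨-, -, hj, hk, hjs, hks⟩ := mem_idx.1 ht
  exact ((isMonomial_entry hjs).mul (isMonomial_entry hj)).mul
    ((isMonomial_entry hks).mul (isMonomial_entry hk))

lemma term_flip {ℓ : ℕ} (i : Fin ℓ) (s j k : ℤ) (ε : Fin ℓ → Bool)
    (h : (if j + s = (i : ℤ) then (-1 : ℤ) else 1) * (if j = (i : ℤ) then -1 else 1) *
      ((if k + s = (i : ℤ) then -1 else 1) * (if k = (i : ℤ) then -1 else 1)) = -1) :
    term ℓ (s, j, k) (flipAt i ε) = -term ℓ (s, j, k) ε := by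
  have h' := congrArg (Int.cast : ℤ → ℝ) h
  push_cast at h'
  simp only [term, entry_flip]
  linear_combination (entry ℓ ε (j + s) * entry ℓ ε j * (entry ℓ ε (k + s) * entry ℓ ε k)) * h'

lemma sum_term {ℓ : ℕ} {t : ℤ × ℤ × ℤ} (ht : t ∈ idx ℓ) : ∑ ε, term ℓ t ε = 0 := by
  obtain ⟨s, j, k⟩ := t
  obtain ⟨hs, hjk, hj, hk, hjs, hks⟩ := mem_idx.1 ht
  -- The smallest of the four positions occurs only once.
  have key : ∀ i : ℤ, (0 ≤ i ∧ i < ℓ) → i = min (min j (j + s)) (min k (k + s)) →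
      ∑ ε, term ℓ (s, j, k) ε = 0 := by
    intro i hi hmin
    refine sum_eq_zero_of_flip (⟨i.toNat, by omega⟩ : Fin ℓ) _ fun ε => term_flip _ _ _ _ _ ?_
    simp only [Int.toNat_of_nonneg hi.1]
    split_ifs <;> omega
  exact key _ (by omega) rfl

lemma autocorr_eq (ℓ : ℕ) (ε : Fin ℓ → Bool) (s : ℤ) :
    (autocorr (seqOf ℓ ε) s : ℝ) = ∑ j ∈ Finset.Ico (0 : ℤ) ℓ, entry ℓ ε (j + s) * entry ℓ ε j := by
  rw [autocorr, finsum_eq_sum_of_support_subset (s := Finset.Ico (0 : ℤ) ℓ)]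
  · simp [entry]
  · intro j hj
    by_contra h
    apply hj
    have : seqOf ℓ ε j = 0 := by
      rw [seqOf, dif_neg]
      simpa using h
    simp [this]

lemma autocorr_zero (ℓ : ℕ) (ε : Fin ℓ → Bool) : (autocorr (seqOf ℓ ε) 0 : ℝ) = ℓ := by
  rw [autocorr_eq, Finset.sum_congr rfl (g := fun _ => 1)]
  · simp
  · intro j hj
    rw [add_zero, ← sq, entry_sq ε (by simpa using hj)]

/-- The contribution of the terms with `j = k`, which is the same for all choices of signs. -/
def diagSum (ℓ : ℕ) : ℝ :=
  ∑ s ∈ (Finset.Ioo (-(ℓ : ℤ)) ℓ).erase 0, ∑ j ∈ Finset.Ico (0 : ℤ) ℓ,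
    if 0 ≤ j + s ∧ j + s < ℓ then 1 else 0

lemma finsum_autocorr_sq (ℓ : ℕ) (ε : Fin ℓ → Bool) :
    ∑ᶠ s ∈ {s : ℤ | s ≠ 0}, ((autocorr (seqOf ℓ ε) s : ℝ)) ^ 2 =
      diagSum ℓ + ∑ t ∈ idx ℓ, term ℓ t ε := by
  have h1 : ∑ᶠ s ∈ {s : ℤ | s ≠ 0}, ((autocorr (seqOf ℓ ε) s : ℝ)) ^ 2 =
      ∑ s ∈ (Finset.Ioo (-(ℓ : ℤ)) ℓ).erase 0, ((autocorr (seqOf ℓ ε) s : ℝ)) ^ 2 := by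
    apply finsum_mem_eq_sum_of_inter_support_eq
    ext s
    simp only [Set.mem_inter_iff, Set.mem_ofPred_eq, Function.mem_support, Finset.coe_erase,
      Finset.coe_Ioo, Set.mem_sdiff, Set.mem_Ioo, Set.mem_singleton_iff]
    constructor
    · rintro ⟨h0, h⟩
      refine ⟨⟨?_, h0⟩, h⟩
      by_contra hs
      apply h
      rw [autocorr_eq, Finset.sum_eq_zero, zero_pow two_ne_zero]
      intro j hj
      rw [Finset.mem_Ico] at hj
      rw [entry_eq_zero ε (j := j + s) (by omega), zero_mul]
    · rintro ⟨⟨-, h0⟩, h⟩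
      exact ⟨h0, h⟩
  have h2 : ∑ t ∈ idx ℓ, term ℓ t ε = ∑ s ∈ (Finset.Ioo (-(ℓ : ℤ)) ℓ).erase 0,
      ∑ j ∈ Finset.Ico (0 : ℤ) ℓ, ∑ k ∈ Finset.Ico (0 : ℤ) ℓ,
        if j ≠ k then term ℓ (s, j, k) ε else 0 := by
    rw [idx, Finset.sum_filter, Finset.sum_product]
    refine Finset.sum_congr rfl fun s _ => ?_
    rw [Finset.sum_product]
    refine Finset.sum_congr rfl fun j _ => Finset.sum_congr rfl fun k _ => ?_
    by_cases hjk : j ≠ k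
    · by_cases hj : 0 ≤ j + s ∧ j + s < (ℓ : ℤ)
      · by_cases hk : 0 ≤ k + s ∧ k + s < (ℓ : ℤ)
        · rw [if_pos ⟨hjk, hj, hk⟩, if_pos hjk]
        · rw [if_neg fun h => hk h.2.2, if_pos hjk]
          simp [term, entry_eq_zero ε hk]
      · rw [if_neg fun h => hj h.2.1, if_pos hjk]
        simp [term, entry_eq_zero ε hj]
    · rw [if_neg fun h => hjk h.1, if_neg hjk]
  rw [h1, h2, diagSum, ← Finset.sum_add_distrib]
  refine Finset.sum_congr rfl fun s _ => ?_
  rw [autocorr_eq, sq, Finset.sum_mul_sum, ← Finset.sum_add_distrib]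
  refine Finset.sum_congr rfl fun j hj => ?_
  have h3 : (if 0 ≤ j + s ∧ j + s < (ℓ : ℤ) then (1 : ℝ) else 0) =
      ∑ k ∈ Finset.Ico (0 : ℤ) ℓ, if j = k then term ℓ (s, j, k) ε else 0 := by
    rw [Finset.sum_ite_eq, if_pos hj]
    split_ifs with h
    · have e1 := entry_sq ε h
      have e2 := entry_sq ε (Finset.mem_Ico.1 hj)
      simp only [term]
      linear_combination -(entry ℓ ε j ^ 2) * e1 - e2
    · simp [term, entry_eq_zero ε h]
  rw [h3, ← Finset.sum_add_distrib]
  refine Finset.sum_congr rfl fun k _ => ?_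
  by_cases h : j = k <;> simp [h, term]

lemma ADF_eq (ℓ : ℕ) (ε : Fin ℓ → Bool) :
    ADF (seqOf ℓ ε) = (diagSum ℓ + ∑ t ∈ idx ℓ, term ℓ t ε) / (ℓ : ℝ) ^ 2 := by
  rw [ADF, autocorr_zero, finsum_autocorr_sq]

lemma expect_ADF (ℓ : ℕ) : expect ℓ ADF = diagSum ℓ / (ℓ : ℝ) ^ 2 := by
  simp only [_root_.expect, ADF_eq]
  rw [← Finset.sum_div, Finset.sum_add_distrib, Finset.sum_comm,
    Finset.sum_eq_zero (s := idx ℓ) fun t ht => sum_term ht]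
  simp
  field_simp

lemma ADF_sub_mean (ℓ : ℕ) (ε : Fin ℓ → Bool) :
    ADF (seqOf ℓ ε) - expect ℓ ADF = (∑ t ∈ idx ℓ, term ℓ t ε) / (ℓ : ℝ) ^ 2 := by
  rw [expect_ADF, ADF_eq]
  ring

lemma centralMoment_ADF (ℓ p : ℕ) : centralMoment p ℓ ADF =
    (∑ ε, (∑ t ∈ idx ℓ, term ℓ t ε) ^ p) / (((ℓ : ℝ) ^ 2) ^ p * 2 ^ ℓ) := by
  rw [centralMoment, _root_.expect]
  simp only [ADF_sub_mean, div_pow]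
  rw [← Finset.sum_div, div_div]

/-! ### Vanishing and positivity -/

lemma idx_eq_empty {ℓ : ℕ} (h : ℓ ≤ 2) : idx ℓ = ∅ := by
  refine Finset.eq_empty_of_forall_notMem ?_
  rintro ⟨s, j, k⟩ ht
  rw [mem_idx] at ht
  omega

lemma sum_pow_three {p : ℕ} (hp : Odd p) : ∑ ε, (∑ t ∈ idx 3, term 3 t ε) ^ p = 0 := by
  refine sum_eq_zero_of_flip (0 : Fin 3) _ fun ε => ?_
  rw [← hp.neg_pow, ← Finset.sum_neg_distrib]
  congr 1
  refine Finset.sum_congr rfl ?_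
  rintro ⟨s, j, k⟩ ht
  rw [mem_idx] at ht
  refine term_flip _ _ _ _ _ ?_
  simp only [Fin.coe_ofNat_eq_mod, Nat.zero_mod, Nat.cast_zero]
  push_cast at ht
  split_ifs <;> omega

lemma sum_pow_even_pos {ℓ p : ℕ} (hℓ : 3 ≤ ℓ) (hp : Even p) :
    0 < ∑ ε, (∑ t ∈ idx ℓ, term ℓ t ε) ^ p := by
  refine sum_pow_pos _ _ (fun t ht => isMonomial_term ht) p (fun _ => (1, 0, 1))
    (fun _ => mem_idx.2 (by omega)) fun ε => ?_
  obtain ⟨n, rfl⟩ := hp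
  have h0 := entry_sq ε (j := 0) (by omega)
  have h1 := entry_sq ε (j := 1) (by omega)
  have h2 := entry_sq ε (j := 2) (by omega)
  have h : term ℓ (1, 0, 1) ε ^ 2 = 1 := by
    norm_num [term, mul_pow, h0, h1, h2]
  rw [Finset.prod_const, Finset.card_univ, Fintype.card_fin, ← two_mul, pow_mul, h, one_pow]

lemma sum_pow_odd_pos {ℓ p : ℕ} (hℓ : 4 ≤ ℓ) (hp : Odd p) (hp1 : p ≠ 1) :
    0 < ∑ ε, (∑ t ∈ idx ℓ, term ℓ t ε) ^ p := by
  obtain ⟨n, rfl⟩ : ∃ n, p = 2 * n + 1 + 1 + 1 := by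
    obtain ⟨k, rfl⟩ := hp
    exact ⟨k - 1, by omega⟩
  refine sum_pow_pos _ _ (fun t ht => isMonomial_term ht) _
    (Fin.cons (1, 1, 2) (Fin.cons (1, 0, 2) fun _ : Fin (2 * n + 1) => (1, 0, 1))) ?_ fun ε => ?_
  · refine Fin.cases (mem_idx.2 (by omega)) (Fin.cases (mem_idx.2 (by omega)) fun i => ?_)
    exact mem_idx.2 (by omega)
  · have h0 := entry_sq ε (j := 0) (by omega)
    have h1 := entry_sq ε (j := 1) (by omega)
    have h2 := entry_sq ε (j := 2) (by omega)
    have h3 := entry_sq ε (j := 3) (by omega)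
    have h : term ℓ (1, 0, 1) ε ^ 2 = 1 := by
      norm_num [term, mul_pow, h0, h1, h2]
    rw [Fin.prod_univ_succ, Fin.prod_univ_succ]
    simp only [Fin.cons_zero, Fin.cons_succ, Finset.prod_const, Finset.card_univ, Fintype.card_fin]
    rw [pow_succ, pow_mul, h, one_pow, one_mul]
    norm_num [term]
    calc _ = entry ℓ ε 0 ^ 2 * (entry ℓ ε 1 ^ 2) ^ 2 * (entry ℓ ε 2 ^ 2) ^ 2 * entry ℓ ε 3 ^ 2 := by
            ring
      _ = 1 := by rw [h0, h1, h2, h3]; norm_num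

/-- Katz–Ramirez 2023: the `p`-th central moment of the demerit factor is
nonnegative, and it is zero exactly when `p = 1`, or `p > 1` is odd and `ℓ ≤ 3`,
or `p` is even and `ℓ ≤ 2`; otherwise it is strictly positive. -/
theorem central_moment_ADF_nonneg (ℓ p : ℕ) (hℓ : 0 < ℓ) (hp : 0 < p) :
    0 ≤ centralMoment p ℓ ADF ∧
    (centralMoment p ℓ ADF = 0 ↔
      p = 1 ∨ (1 < p ∧ Odd p ∧ ℓ ≤ 3) ∨ (Even p ∧ ℓ ≤ 2)) := by
  have hℓ' : (0 : ℝ) < ℓ := by exact_mod_cast hℓ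
  have hden : (0 : ℝ) < ((ℓ : ℝ) ^ 2) ^ p * 2 ^ ℓ := by positivity
  rw [centralMoment_ADF]
  refine ⟨div_nonneg (sum_pow_nonneg _ _ (fun t ht => isMonomial_term ht) p) hden.le, ?_⟩
  rw [div_eq_zero_iff, or_iff_left hden.ne']
  constructor
  · intro h0
    by_contra hcon
    push Not at hcon
    obtain ⟨hp1, hodd, heven⟩ := hcon
    rcases Nat.even_or_odd p with he | ho
    · exact (sum_pow_even_pos (heven he) he).ne' h0
    · exact (sum_pow_odd_pos (hodd (by omega) ho) ho hp1).ne' h0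
  · have hsmall : ℓ ≤ 2 → ∑ ε, (∑ t ∈ idx ℓ, term ℓ t ε) ^ p = 0 := by
      intro h
      simp [idx_eq_empty h, hp.ne']
    rintro (rfl | ⟨-, ho, h3⟩ | ⟨-, h2⟩)
    · simp only [pow_one]
      rw [Finset.sum_comm]
      exact Finset.sum_eq_zero fun t ht => sum_term ht
    · rcases h3.lt_or_eq with h | rfl
      · exact hsmall (by omega)
      · exact sum_pow_three ho
    · exact hsmall h2
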